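/- arXiv:1003.0021 — 3 statements merged into one kernel-verified Lean document; each statement's English description precedes it below -/
import Mathlib

section
/- For every integer n > 6k+3 with k ≥ 1, if an integer t has exactly k representations as a non-negative integer linear combination of X_n = (2n-2, 2n-1, 2n, 3n-3, 3n) (i.e., R_{X_n}(t) = k), then t ≤ (6k+3)n - 1. -/
/-!
A representation of `t` by `X_n` with coefficients `(a, b, c, d, e)` reads `t = n s - r`, where
`s = 2 (a + b + c) + 3 (d + e)` and `r = 2 a + b + 3 d ≤ s`. Conversely, fix `s` and `r ≤ s`. For
every pair `(p, q)` with `2 p + 3 q = s`, and `p ≥ 1` or `r = 0`, there is a representation with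
`a + b + c = p` and `d + e = q` that realises the given `r` (`exists_coeffs`), so it represents the
same `t`.

Suppose `t` has `k ≥ 1` representations and `t ≥ (6 k + 3) n`. One of them gives some `s` and `r`
with `n s - r ≥ (6 k + 3) n`, hence `s ≥ 6 k + 3`, with `r = 0` in case of equality. The `k + 1`
values `q = s % 2 + 2 j`, `j ≤ k`, then all yield admissible pairs `(p, q)`, so `t` has at least
`k + 1` representations, a contradiction.
-/

/-- Number of representations of `t` as a non-negative integer linear
combination of the entries of the tuple `x`. -/
noncomputable def numRep (x : List ℕ) (t : ℕ) : ℕ :=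
  Nat.card {c : Fin x.length → ℕ // ∑ i, c i * x.get i = t}

/-- `t` is representable as a non-negative integer linear combination of the
entries of the tuple `x`. -/
def Representable (x : List ℕ) (t : ℕ) : Prop :=
  ∃ c : Fin x.length → ℕ, ∑ i, c i * x.get i = t

/-- No entry of the tuple `x` is a non-negative integer linear combination of
the other entries. -/
def Reasonable (x : List ℕ) : Prop :=
  ∀ i : Fin x.length, ¬ ∃ c : Fin x.length → ℕ,
    c i = 0 ∧ ∑ j, c j * x.get j = x.get i

/-- The 5-tuple `X_n = (2n-2, 2n-1, 2n, 3n-3, 3n)`. -/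
def X (n : ℕ) : List ℕ := [2*n-2, 2*n-1, 2*n, 3*n-3, 3*n]

/-- The n-tuple `Y_n = (n+1, n+4, n+5, n+7, n+8, ..., 2n+1, 2n+3, 2n+4)`. -/
def Y (n : ℕ) : List ℕ :=
  [n+1, n+4, n+5] ++ List.range' (n+7) (n-5) ++ [2*n+3, 2*n+4]

/-- The defining equation of a representation by `X_n`, written for `n = m + 1` to avoid
truncated subtraction. -/
lemma sum_X (m : ℕ) (c : Fin (X (m + 1)).length → ℕ) :
    ∑ i, c i * (X (m + 1)).get i =
      c (0 : Fin 5) * (2 * m) + c (1 : Fin 5) * (2 * m + 1) + c (2 : Fin 5) * (2 * m + 2)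
        + c (3 : Fin 5) * (3 * m) + c (4 : Fin 5) * (3 * m + 3) := by
  change ∑ i : Fin 5, c i * ([2 * (m + 1) - 2, 2 * (m + 1) - 1, 2 * (m + 1), 3 * (m + 1) - 3,
    3 * (m + 1)] : List ℕ).get i = _
  rw [Fin.sum_univ_five]
  have h1 : 2 * (m + 1) - 2 = 2 * m := by omega
  have h2 : 2 * (m + 1) - 1 = 2 * m + 1 := by omega
  have h3 : 3 * (m + 1) - 3 = 3 * m := by omega
  rw [h1, h2, h3]
  rfl

lemma finite_reps (m t : ℕ) (hm : 1 ≤ m) :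
    Finite {c : Fin (X (m + 1)).length → ℕ // ∑ i, c i * (X (m + 1)).get i = t} := by
  refine Set.Finite.to_subtype (s := {c | ∑ i, c i * (X (m + 1)).get i = t})
    ((Set.finite_Iic (fun _ => t)).subset ?_)
  intro c hc i
  have hpos : 1 ≤ (X (m + 1)).get i := by
    have h : ∀ x ∈ X (m + 1), 1 ≤ x := by
      intro x hx
      simp only [X, List.mem_cons, List.not_mem_nil, or_false] at hx
      omega
    exact h _ (List.get_mem _ _)
  have hle : c i * (X (m + 1)).get i ≤ ∑ i, c i * (X (m + 1)).get i :=
    Finset.single_le_sum (f := fun i => c i * (X (m + 1)).get i)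
      (fun _ _ => Nat.zero_le _) (Finset.mem_univ i)
  calc c i ≤ c i * (X (m + 1)).get i := Nat.le_mul_of_pos_right _ hpos
    _ ≤ ∑ i, c i * (X (m + 1)).get i := hle
    _ = t := hc

/-- Given the numbers `p`, `q` of summands of the two kinds, every `r ≤ 2 p + 3 q` is attained as
`2 a + b + 3 d`, unless `p = 0` and `r ≠ 0`. -/
lemma exists_coeffs (p q r : ℕ) (hr : r ≤ 2 * p + 3 * q) (h : 1 ≤ p ∨ r = 0) :
    ∃ a b c d e : ℕ, a + b + c = p ∧ d + e = q ∧ 2 * a + b + 3 * d = r := by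
  -- Take `d` as large as possible; the remainder `r - 3 d` is at most `2 p`.
  rcases le_total q (r / 3) with hq | hq
  · exact ⟨(r - 3 * q) / 2, (r - 3 * q) % 2, p - (r - 3 * q) / 2 - (r - 3 * q) % 2, q, 0,
      by omega, by omega, by omega⟩
  · exact ⟨(r % 3) / 2, (r % 3) % 2, p - (r % 3) / 2 - (r % 3) % 2, r / 3, q - r / 3,
      by omega, by omega, by omega⟩

/-- For `n = m + 1`, if `t = n s - r` with `r ≤ s`, `s ≥ 6 k + 3`, and `r = 0` when
`s = 6 k + 3`, then `t` has more than `k` representations. -/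
lemma lt_numRep (k m t s r : ℕ) (hm : 1 ≤ m) (ht : t + r = s * (m + 1)) (hrs : r ≤ s)
    (hs : 6 * k + 3 ≤ s) (hr : 6 * k + 4 ≤ s ∨ r = 0) : k < numRep (X (m + 1)) t := by
  have key : ∀ j : Fin (k + 1),
      ∃ c : {c : Fin (X (m + 1)).length → ℕ // ∑ i, c i * (X (m + 1)).get i = t},
        c.1 (3 : Fin 5) + c.1 (4 : Fin 5) = s % 2 + 2 * j.1 := by
    intro j
    have hj := j.2
    obtain ⟨p, hp⟩ : ∃ p, 2 * p + 3 * (s % 2 + 2 * j.1) = s :=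
      ⟨(s - 3 * (s % 2 + 2 * j.1)) / 2, by omega⟩
    obtain ⟨a, b, c, d, e, hp', hq', hr'⟩ :=
      exists_coeffs p (s % 2 + 2 * j.1) r (by omega) (by omega)
    refine ⟨⟨(![a, b, c, d, e] : Fin 5 → ℕ), ?_⟩, hq'⟩
    refine (sum_X m (![a, b, c, d, e] : Fin 5 → ℕ)).trans ?_
    change a * (2 * m) + b * (2 * m + 1) + c * (2 * m + 2) + d * (3 * m) + e * (3 * m + 3) = t
    rw [← hq', ← hp'] at hp
    rw [← hp, ← hr'] at ht
    linarith
  choose f hf using key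
  have hinj : Function.Injective f := by
    intro i j hij
    have hi := hf i
    rw [hij, hf j] at hi
    exact Fin.ext (by omega)
  have := finite_reps m t hm
  have hcard := Nat.card_le_card_of_injective f hinj
  rw [Nat.card_fin] at hcard
  exact hcard

/-- For every integer `n > 6k+3` with `k ≥ 1`, if an integer `t` has exactly
`k` representations as a non-negative integer linear combination of
`X_n = (2n-2, 2n-1, 2n, 3n-3, 3n)`, then `t ≤ (6k+3)n - 1`. -/
theorem stmt4 (k n : ℕ) (hk : 1 ≤ k) (hn : 6 * k + 3 < n) (t : ℕ)
    (ht : numRep (X n) t = k) : t ≤ (6 * k + 3) * n - 1 := by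
  by_contra hcon
  have hlarge : (6 * k + 3) * n ≤ t := by omega
  obtain ⟨m, rfl⟩ : ∃ m, n = m + 1 := ⟨n - 1, by omega⟩
  have hpos : 0 < numRep (X (m + 1)) t := by omega
  obtain ⟨⟨⟨c, hc⟩⟩, -⟩ := Nat.card_pos_iff.mp hpos
  rw [sum_X] at hc
  generalize c (0 : Fin 5) = a₀ at hc
  generalize c (1 : Fin 5) = a₁ at hc
  generalize c (2 : Fin 5) = a₂ at hc
  generalize c (3 : Fin 5) = a₃ at hc
  generalize c (4 : Fin 5) = a₄ at hc
  obtain ⟨s, hs⟩ : ∃ s, s = 2 * (a₀ + a₁ + a₂) + 3 * (a₃ + a₄) := ⟨_, rfl⟩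
  obtain ⟨r, hr⟩ : ∃ r, r = 2 * a₀ + a₁ + 3 * a₃ := ⟨_, rfl⟩
  have hts : t + r = s * (m + 1) := by rw [← hc, hs, hr]; ring
  have hle : 6 * k + 3 ≤ s :=
    Nat.le_of_mul_le_mul_right (c := m + 1) (by omega) (by omega)
  have hzero : 6 * k + 4 ≤ s ∨ r = 0 := by
    rcases Nat.eq_or_lt_of_le hle with h | h
    · right
      rw [h] at hlarge
      omega
    · exact Or.inl h
  have := lt_numRep k m t s r (by omega) hts (by omega) hle hzero
  omega
end

section
/- For every integer n ≥ 6, every integer t ≥ 2n+8 has at least two representations as a non-negative integer linear combination of the n-tuple Y_n = (n+1, n+4, n+5, n+7, ..., 2n+1, 2n+3, 2n+4); that is, R_{Y_n}(t) ≥ 2. -/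
/-- There are two distinct multisets of entries of `L` with sum `t`. -/
def TwoReps (L : List ℕ) (t : ℕ) : Prop :=
  ∃ s s' : Multiset ℕ, s ≠ s' ∧ (∀ x ∈ s, x ∈ L) ∧ (∀ x ∈ s', x ∈ L) ∧ s.sum = t ∧ s'.sum = t

/-- The coefficient vector of a multiset of entries of a duplicate-free list records its
multiplicities. -/
lemma sum_count_mul_get {L : List ℕ} (hL : L.Nodup) {s : Multiset ℕ} (hs : ∀ x ∈ s, x ∈ L) :
    ∑ i : Fin L.length, s.count (L.get i) * L.get i = s.sum := by
  have hsub : s.toFinset ⊆ L.toFinset := fun x hx => by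
    simpa using hs x (by simpa using hx)
  rw [Finset.sum_multiset_count_of_subset s L.toFinset hsub, List.sum_toFinset _ hL]
  simp only [smul_eq_mul, List.get_eq_getElem]
  exact Fin.sum_univ_fun_getElem L (fun x => s.count x * x)

lemma two_le_numRep {L : List ℕ} (hL : L.Nodup) (hpos : ∀ x ∈ L, 0 < x) {t : ℕ}
    (h : TwoReps L t) : 2 ≤ numRep L t := by
  obtain ⟨s, s', hne, hs, hs', hsum, hsum'⟩ := h
  -- Finiteness matters: `Nat.card` of an infinite type would be `0`.
  have hfin : Finite {c : Fin L.length → ℕ // ∑ i, c i * L.get i = t} := by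
    refine (Set.Finite.subset (Set.finite_Iic (fun _ : Fin L.length => t)) ?_ :
      {c : Fin L.length → ℕ | ∑ i, c i * L.get i = t}.Finite)
    intro c hc i
    calc c i ≤ c i * L.get i := Nat.le_mul_of_pos_right _ (hpos _ (List.get_mem L i))
      _ ≤ ∑ j, c j * L.get j :=
        Finset.single_le_sum (f := fun j => c j * L.get j) (fun _ _ => Nat.zero_le _)
          (Finset.mem_univ i)
      _ = t := hc
  have hnt : Nontrivial {c : Fin L.length → ℕ // ∑ i, c i * L.get i = t} := by
    refine ⟨⟨fun i => s.count (L.get i), (sum_count_mul_get hL hs).trans hsum⟩,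
      ⟨fun i => s'.count (L.get i), (sum_count_mul_get hL hs').trans hsum'⟩, fun heq => hne ?_⟩
    have hfun := Subtype.ext_iff.mp heq
    ext x
    by_cases hx : x ∈ L
    · obtain ⟨i, rfl⟩ := List.get_of_mem hx
      exact congrFun hfun i
    · rw [Multiset.count_eq_zero_of_notMem fun h => hx (hs x h),
        Multiset.count_eq_zero_of_notMem fun h => hx (hs' x h)]
  exact Finite.one_lt_card

lemma mem_Y {n x : ℕ} (hn : 6 ≤ n) : x ∈ Y n ↔ x = n + 1 ∨ x = n + 4 ∨ x = n + 5 ∨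
    (n + 7 ≤ x ∧ x ≤ 2 * n + 1) ∨ x = 2 * n + 3 ∨ x = 2 * n + 4 := by
  simp only [Y, List.mem_append, List.mem_cons, List.mem_range'_1, List.not_mem_nil, or_false]
  omega

lemma nodup_Y {n : ℕ} (hn : 6 ≤ n) : (Y n).Nodup := by
  simp only [Y, List.nodup_append, List.mem_append, List.mem_cons,
    List.mem_range'_1, List.not_mem_nil, or_false, List.nodup_cons, List.nodup_nil]
  refine ⟨⟨?_, ?_, ?_⟩, ?_, ?_⟩ <;> grind

lemma TwoReps.pair_pair {L : List ℕ} {a b c d : ℕ} (ha : a ∈ L) (hb : b ∈ L) (hc : c ∈ L)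
    (hd : d ∈ L) (hac : a ≠ c) (had : a ≠ d) {t : ℕ} (h : a + b = t) (h' : c + d = t) :
    TwoReps L t := by
  refine ⟨{a, b}, {c, d}, fun he => ?_, by simp [ha, hb], by simp [hc, hd], by simpa, by simpa⟩
  have : a ∈ ({c, d} : Multiset ℕ) := he ▸ by simp
  simp [hac, had] at this

lemma TwoReps.pair_triple {L : List ℕ} {a b c d e : ℕ} (ha : a ∈ L) (hb : b ∈ L) (hc : c ∈ L)
    (hd : d ∈ L) (he : e ∈ L) {t : ℕ} (h : a + b = t) (h' : c + d + e = t) :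
    TwoReps L t := by
  refine ⟨{a, b}, {c, d, e}, fun heq => ?_, by simp [ha, hb], by simp [hc, hd, he], by simpa,
    by simp [← h', add_assoc]⟩
  simpa using congrArg Multiset.card heq

lemma TwoReps.add_mem {L : List ℕ} {t a : ℕ} (ha : a ∈ L) (h : TwoReps L t) :
    TwoReps L (t + a) := by
  obtain ⟨s, s', hne, hs, hs', hsum, hsum'⟩ := h
  refine ⟨a ::ₘ s, a ::ₘ s', by simpa using hne, ?_, ?_, ?_, ?_⟩
  · simpa [ha] using hs
  · simpa [ha] using hs'
  · rw [Multiset.sum_cons, hsum, add_comm]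
  · rw [Multiset.sum_cons, hsum', add_comm]

lemma twoReps_base {n t : ℕ} (hn : 6 ≤ n) (h1 : 2 * n + 8 ≤ t) (h2 : t ≤ 3 * n + 8) :
    TwoReps (Y n) t := by
  have hY : ∀ x, (x = n + 1 ∨ x = n + 4 ∨ x = n + 5 ∨
    (n + 7 ≤ x ∧ x ≤ 2 * n + 1) ∨ x = 2 * n + 3 ∨ x = 2 * n + 4) → x ∈ Y n :=
    fun x => (mem_Y hn).2
  obtain h | h : t ≤ 3 * n + 2 ∨ 3 * n + 2 < t := by omega
  · -- `t = 2m + r` with `6 ≤ r < m`; the offset `5` is not available, which rules out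
    -- `8 = 3 + 5` and forces `8 = 4 + 4`.
    by_cases h8 : t = 2 * n + 10
    · apply TwoReps.pair_pair (a := n + 1) (b := n + 9) (c := n + 5) (d := n + 5) <;>
        first | (apply hY; omega) | omega
    · apply TwoReps.pair_pair (a := n + 1) (b := t - (n + 1)) (c := n + 4) (d := t - (n + 4)) <;>
        first | (apply hY; omega) | omega
  obtain rfl | rfl | rfl | rfl | rfl | rfl : t = 3 * n + 3 ∨ t = 3 * n + 4 ∨ t = 3 * n + 5 ∨
    t = 3 * n + 6 ∨ t = 3 * n + 7 ∨ t = 3 * n + 8 := by omega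
  · -- `(m + 3) + (2m - 3)` needs `m ≥ 9`; for `m = 7, 8` the entry `2m - 4` equals `m + 3`, `m + 4`.
    by_cases h7 : n ≤ 7
    · apply TwoReps.pair_triple (a := n + 5) (b := 2 * n - 2) (c := n + 1) (d := n + 1)
        (e := n + 1) <;> first | (apply hY; omega) | omega
    · apply TwoReps.pair_triple (a := n + 4) (b := 2 * n - 1) (c := n + 1) (d := n + 1)
        (e := n + 1) <;> first | (apply hY; omega) | omega
  · -- `(m + 3) + (2m - 2)` needs `m ≥ 8`; for `m = 7` the entry `2m - 3` equals `m + 4`.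
    by_cases h6 : n = 6
    · apply TwoReps.pair_pair (a := n + 1) (b := 2 * n + 3) (c := n + 5) (d := n + 5) <;>
        first | (apply hY; omega) | omega
    · apply TwoReps.pair_pair (a := n + 1) (b := 2 * n + 3) (c := n + 4) (d := 2 * n) <;>
        first | (apply hY; omega) | omega
  · apply TwoReps.pair_pair (a := n + 1) (b := 2 * n + 4) (c := n + 4) (d := 2 * n + 1) <;>
      first | (apply hY; omega) | omega
  · apply TwoReps.pair_triple (a := n + 5) (b := 2 * n + 1) (c := n + 1) (d := n + 1)
      (e := n + 4) <;> first | (apply hY; omega) | omega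
  · apply TwoReps.pair_triple (a := n + 4) (b := 2 * n + 3) (c := n + 1) (d := n + 1)
      (e := n + 5) <;> first | (apply hY; omega) | omega
  · apply TwoReps.pair_pair (a := n + 4) (b := 2 * n + 4) (c := n + 5) (d := 2 * n + 3) <;>
      first | (apply hY; omega) | omega

lemma twoReps_Y {n : ℕ} (hn : 6 ≤ n) (t : ℕ) (ht : 2 * n + 8 ≤ t) : TwoReps (Y n) t := by
  induction t using Nat.strong_induction_on with
  | _ t ih =>
    by_cases h : t ≤ 3 * n + 8
    · exact twoReps_base hn ht h
    · have := (ih (t - (n + 1)) (by omega) (by omega)).add_mem ((mem_Y hn).2 (Or.inl rfl))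
      rwa [Nat.sub_add_cancel (by omega)] at this

/-- For every integer `n ≥ 6`, every integer `t ≥ 2n+8` has at least two
representations as a non-negative integer linear combination of the n-tuple
`Y_n = (n+1, n+4, n+5, n+7, ..., 2n+1, 2n+3, 2n+4)`. -/
theorem stmt13 (n : ℕ) (hn : 6 ≤ n) (t : ℕ) (ht : 2 * n + 8 ≤ t) :
    2 ≤ numRep (Y n) t :=
  two_le_numRep (nodup_Y hn) (fun x hx => by rw [mem_Y hn] at hx; omega) (twoReps_Y hn t ht)
end

section
/- For every integer n ≥ 1, the largest integer not representable as a non-negative integer linear combination of the 5-tuple (10n-1, 15n-1, 20n-1, 25n, 30n-1) is 50n² - 1, and the largest integer having exactly one such representation is 50n² - 5n; consequently g_0 - g_1 = 5n - 1 for this family, which tends to infinity with n. -/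
/-- `(c 0, ..., c 4)` is a coefficient vector representing `t` by
`(10n-1, 15n-1, 20n-1, 25n, 30n-1)`; the equation is `5n * W = t + s`, which avoids
subtraction. -/
def IsRep (n t : ℕ) (c : Fin 5 → ℕ) : Prop :=
  5 * n * (2 * c 0 + 3 * c 1 + 4 * c 2 + 5 * c 3 + 6 * c 4) = t + (c 0 + c 1 + c 2 + c 4)

lemma numRep_eq (n t : ℕ) (hn : 1 ≤ n) :
    numRep [10*n - 1, 15*n - 1, 20*n - 1, 25*n, 30*n - 1] t =
      Nat.card {c : Fin 5 → ℕ // IsRep n t c} := by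
  change Nat.card {c : Fin 5 → ℕ //
    ∑ i : Fin 5, c i * [10*n - 1, 15*n - 1, 20*n - 1, 25*n, 30*n - 1].get i = t} = _
  congr 1
  congr 1
  funext c
  obtain ⟨m, rfl⟩ : ∃ m, n = m + 1 := ⟨n - 1, by omega⟩
  have h1 : 10 * (m + 1) - 1 = 10 * m + 9 := by omega
  have h2 : 15 * (m + 1) - 1 = 15 * m + 14 := by omega
  have h3 : 20 * (m + 1) - 1 = 20 * m + 19 := by omega
  have h4 : 30 * (m + 1) - 1 = 30 * m + 29 := by omega
  rw [Fin.sum_univ_five, h1, h2, h3, h4]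
  change (c 0 * (10 * m + 9) + c 1 * (15 * m + 14) + c 2 * (20 * m + 19) + c 3 * (25 * (m + 1))
    + c 4 * (30 * m + 29) = t) = _
  apply propext
  unfold IsRep
  constructor <;> intro h <;> nlinarith

/-- Needed because `Nat.card` is `0` on infinite types. -/
lemma finite_reps_s17 (n t : ℕ) (hn : 1 ≤ n) : Finite {c : Fin 5 → ℕ // IsRep n t c} := by
  apply Set.Finite.to_subtype (s := {c : Fin 5 → ℕ | IsRep n t c})
  apply (Set.finite_Iic (fun _ : Fin 5 => t)).subset
  intro c hc
  have hc' : 5 * n * (2 * c 0 + 3 * c 1 + 4 * c 2 + 5 * c 3 + 6 * c 4)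
    = t + (c 0 + c 1 + c 2 + c 4) := hc
  have := Nat.mul_le_mul_right (2 * c 0 + 3 * c 1 + 4 * c 2 + 5 * c 3 + 6 * c 4)
    (show 5 ≤ 5 * n by omega)
  intro i
  fin_cases i <;> simp <;> omega

/-- Two different coefficient vectors with prescribed `s` and `W`. -/
lemma exists_two_of_excess (s W : ℕ) (h : (3 ≤ s ∧ 2 * s + 2 ≤ W) ∨ (2 ≤ s ∧ 2 * s + 4 ≤ W)) :
    ∃ c c' : Fin 5 → ℕ, c ≠ c' ∧
      (c 0 + c 1 + c 2 + c 4 = s ∧ 2 * c 0 + 3 * c 1 + 4 * c 2 + 5 * c 3 + 6 * c 4 = W) ∧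
      (c' 0 + c' 1 + c' 2 + c' 4 = s ∧
        2 * c' 0 + 3 * c' 1 + 4 * c' 2 + 5 * c' 3 + 6 * c' 4 = W) := by
  -- It is enough to write the excess `W - 2s` in two ways as `b + 2c + 5d + 4e`.
  suffices H : ∃ b c d e b' c' d' e' : ℕ, (b ≠ b' ∨ c ≠ c') ∧ b + c + e ≤ s ∧ b' + c' + e' ≤ s ∧
      2 * s + (b + 2 * c + 5 * d + 4 * e) = W ∧ 2 * s + (b' + 2 * c' + 5 * d' + 4 * e') = W by
    obtain ⟨b, c, d, e, b', c', d', e', hne, h1, h2, h3, h4⟩ := H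
    refine ⟨![s - (b + c + e), b, c, d, e], ![s - (b' + c' + e'), b', c', d', e'], ?_, ?_, ?_⟩
    · intro heq
      have e1 := congrFun heq 1
      have e2 := congrFun heq 2
      simp at e1 e2
      omega
    · simp; omega
    · simp; omega
  by_cases f2 : W = 2 * s + 2
  · exact ⟨0, 1, 0, 0, 2, 0, 0, 0, by omega, by omega, by omega, by omega, by omega⟩
  by_cases f3 : W = 2 * s + 3
  · exact ⟨1, 1, 0, 0, 3, 0, 0, 0, by omega, by omega, by omega, by omega, by omega⟩
  obtain ⟨q, hq⟩ : ∃ q, W = 2 * s + 5 * q + 4 ∨ W = 2 * s + 5 * q + 5 ∨ W = 2 * s + 5 * q + 6 ∨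
      W = 2 * s + 5 * q + 7 ∨ W = 2 * s + 5 * q + 8 := ⟨(W - 2 * s - 4) / 5, by omega⟩
  rcases hq with hq | hq | hq | hq | hq
  · exact ⟨0, 0, q, 1, 0, 2, q, 0, by omega, by omega, by omega, by omega, by omega⟩
  · exact ⟨0, 0, q + 1, 0, 1, 0, q, 1, by omega, by omega, by omega, by omega, by omega⟩
  · exact ⟨1, 0, q + 1, 0, 0, 1, q, 1, by omega, by omega, by omega, by omega, by omega⟩
  · exact ⟨0, 1, q + 1, 0, 2, 0, q + 1, 0, by omega, by omega, by omega, by omega, by omega⟩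
  · exact ⟨1, 1, q + 1, 0, 0, 0, q, 2, by omega, by omega, by omega, by omega, by omega⟩

lemma exists_two_isRep (n t s W : ℕ) (hW : 5 * n * W = t + s)
    (h : (3 ≤ s ∧ 2 * s + 2 ≤ W) ∨ (2 ≤ s ∧ 2 * s + 4 ≤ W)) :
    ∃ c c' : Fin 5 → ℕ, c ≠ c' ∧ IsRep n t c ∧ IsRep n t c' := by
  obtain ⟨c, c', hne, ⟨h1, h2⟩, h3, h4⟩ := exists_two_of_excess s W h
  exact ⟨c, c', hne, by rw [IsRep, h1, h2, hW], by rw [IsRep, h3, h4, hW]⟩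

/-- One coefficient vector with prescribed `s ≥ 1` and excess `0` or `1`. -/
lemma exists_isRep_small (n t s W : ℕ) (hW : 5 * n * W = t + s) (hs : 1 ≤ s)
    (h : W = 2 * s ∨ W = 2 * s + 1) :
    ∃ c : Fin 5 → ℕ, c 0 + c 1 + c 2 + c 4 = s ∧ IsRep n t c := by
  suffices H : ∃ c : Fin 5 → ℕ, c 0 + c 1 + c 2 + c 4 = s ∧
      2 * c 0 + 3 * c 1 + 4 * c 2 + 5 * c 3 + 6 * c 4 = W by
    obtain ⟨c, h1, h2⟩ := H
    exact ⟨c, h1, by rw [IsRep, h1, h2, hW]⟩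
  rcases h with h | h
  · exact ⟨![s, 0, 0, 0, 0], by simp, by simp; omega⟩
  · exact ⟨![s - 1, 1, 0, 0, 0], by simp; omega, by simp; omega⟩

/-- One coefficient vector with `s = 1`, for `W` not divisible by `5`. -/
lemma exists_isRep_one (n t W : ℕ) (hW : 5 * n * W = t + 1) (h2 : 2 ≤ W) (h5 : W % 5 ≠ 0) :
    ∃ c : Fin 5 → ℕ, c 0 + c 1 + c 2 + c 4 = 1 ∧ IsRep n t c := by
  suffices H : ∃ c : Fin 5 → ℕ, c 0 + c 1 + c 2 + c 4 = 1 ∧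
      2 * c 0 + 3 * c 1 + 4 * c 2 + 5 * c 3 + 6 * c 4 = W by
    obtain ⟨c, h1, h2⟩ := H
    exact ⟨c, h1, by rw [IsRep, h1, h2, hW]⟩
  have : W % 5 = 1 ∨ W % 5 = 2 ∨ W % 5 = 3 ∨ W % 5 = 4 := by omega
  rcases this with h | h | h | h
  · exact ⟨![0, 0, 0, W / 5 - 1, 1], by simp, by simp; omega⟩
  · exact ⟨![1, 0, 0, W / 5, 0], by simp, by simp; omega⟩
  · exact ⟨![0, 1, 0, W / 5, 0], by simp, by simp; omega⟩
  · exact ⟨![0, 0, 1, W / 5, 0], by simp, by simp; omega⟩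

lemma exists_two (n t : ℕ) (hn : 1 ≤ n) (ht : 50 * n ^ 2 < t + 5 * n) (hne : t + 1 ≠ 50 * n ^ 2) :
    ∃ c c' : Fin 5 → ℕ, c ≠ c' ∧ IsRep n t c ∧ IsRep n t c' := by
  obtain ⟨s, W, hs, hW⟩ : ∃ s W : ℕ, s < 5 * n ∧ 5 * n * W = t + s := by
    have h1 := Nat.div_add_mod t (5 * n)
    have h2 := Nat.mod_lt t (show 0 < 5 * n by omega)
    by_cases h0 : t % (5 * n) = 0
    · exact ⟨0, t / (5 * n), by omega, by omega⟩
    · exact ⟨5 * n - t % (5 * n), t / (5 * n) + 1, by omega, by rw [Nat.mul_add]; omega⟩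
  have hW10 : 10 * n ≤ W := by
    by_contra hlt
    have : 5 * n * (W + 1) ≤ 5 * n * (10 * n) := Nat.mul_le_mul_left _ (by omega)
    nlinarith
  -- the next solution, `k = 1` in the notation above
  have hW' : 5 * n * (W + 1) = t + (s + 5 * n) := by rw [Nat.mul_add]; omega
  by_cases hs2 : 2 ≤ s
  · exact exists_two_isRep n t s W hW (by omega)
  by_cases hs0 : s = 0
  · subst hs0
    by_cases hWe : W = 10 * n
    · -- here `k = 0` and `k = 1` give one representation each
      obtain ⟨c, hc, hr⟩ := exists_isRep_small n t _ _ hW' (by omega) (by omega)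
      refine ⟨![0, 0, 0, 2 * n, 0], c, ?_, ?_, hr⟩
      · rintro rfl
        simp at hc
        omega
      · simp [IsRep]
        rw [← Nat.add_zero t, ← hW, hWe]
        ring
    · exact exists_two_isRep n t _ _ hW' (by omega)
  obtain rfl : s = 1 := by omega
  have hWe : W ≠ 10 * n := by
    rintro rfl
    apply hne
    rw [← hW]
    ring
  by_cases h5 : W % 5 = 0
  · exact exists_two_isRep n t _ _ hW' (by omega)
  · obtain ⟨c, hc, hr⟩ := exists_isRep_one n t W hW (by omega) h5
    by_cases hbig : 10 * n + 3 ≤ W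
    · exact exists_two_isRep n t _ _ hW' (by omega)
    · obtain ⟨c', hc', hr'⟩ := exists_isRep_small n t _ _ hW' (by omega) (by omega)
      refine ⟨c, c', ?_, hr, hr'⟩
      rintro rfl
      omega

lemma not_isRep (n t : ℕ) (hn : 1 ≤ n) (ht : t + 1 = 50 * n ^ 2) (c : Fin 5 → ℕ) :
    ¬ IsRep n t c := by
  unfold IsRep
  intro h
  generalize c 0 = a, c 1 = b, c 2 = x, c 3 = d, c 4 = e at h
  obtain ⟨W, hW⟩ : ∃ W, W = 2 * a + 3 * b + 4 * x + 5 * d + 6 * e := ⟨_, rfl⟩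
  obtain ⟨s, hs⟩ : ∃ s, s = a + b + x + e := ⟨_, rfl⟩
  rw [← hW, ← hs] at h
  have h10 : 10 * n ≤ W := by
    by_contra hlt
    have : 5 * n * (W + 1) ≤ 5 * n * (10 * n) := Nat.mul_le_mul_left _ (by omega)
    nlinarith
  obtain ⟨j, rfl⟩ := Nat.exists_eq_add_of_le h10
  have hsj : s = 1 + 5 * (n * j) := by nlinarith
  -- `W ≥ 2s` forces `j = 0`
  have hj : j = 0 := by
    by_contra hj
    have h1 : 1 * j ≤ n * j := Nat.mul_le_mul_right _ hn
    have h2 : n * 1 ≤ n * j := Nat.mul_le_mul_left _ (by omega)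
    have h3 : 10 * n + j < 10 * (n * j) + 2 := by
      have : (n - 1 + 1) * (j - 1 + 1) = n * j := by
        rw [Nat.sub_add_cancel hn, Nat.sub_add_cancel (by omega)]
      nlinarith [Nat.zero_le ((n - 1) * (j - 1)), Nat.sub_add_cancel hn,
        Nat.sub_add_cancel (show 1 ≤ j by omega)]
    omega
  subst hj
  rw [Nat.mul_zero] at hsj
  have ha : a = 0 ∨ a = 1 := by omega
  have hb : b = 0 ∨ b = 1 := by omega
  have hx : x = 0 ∨ x = 1 := by omega
  rcases ha with rfl | rfl <;> rcases hb with rfl | rfl <;> rcases hx with rfl | rfl <;> omega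

lemma isRep_unique (n t : ℕ) (hn : 1 ≤ n) (ht : t + 5 * n = 50 * n ^ 2) (c : Fin 5 → ℕ) :
    IsRep n t c ↔ c = ![5 * n, 0, 0, 0, 0] := by
  constructor
  swap
  · rintro rfl
    simp [IsRep]
    rw [ht]
    ring
  intro h
  suffices H : c 0 = 5 * n ∧ c 1 = 0 ∧ c 2 = 0 ∧ c 3 = 0 ∧ c 4 = 0 by
    obtain ⟨h0, h1, h2, h3, h4⟩ := H
    ext i
    fin_cases i <;> simpa
  unfold IsRep at h
  generalize c 0 = a, c 1 = b, c 2 = x, c 3 = d, c 4 = e at h ⊢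
  obtain ⟨W, hW⟩ : ∃ W, W = 2 * a + 3 * b + 4 * x + 5 * d + 6 * e := ⟨_, rfl⟩
  obtain ⟨s, hs⟩ : ∃ s, s = a + b + x + e := ⟨_, rfl⟩
  rw [← hW, ← hs] at h
  have h10 : 10 * n ≤ W + 1 := by
    by_contra hlt
    have : 5 * n * (W + 2) ≤ 5 * n * (10 * n) := Nat.mul_le_mul_left _ (by omega)
    nlinarith
  obtain ⟨j, hj⟩ := Nat.exists_eq_add_of_le h10
  have hsj : s = 5 * (n * j) := by
    have : 5 * n * (W + 1) = 5 * n * (10 * n + j) := by rw [hj]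
    nlinarith
  -- `j = 0` would force `W = 5d = 10n - 1`, and `j ≥ 2` contradicts `W ≥ 2s`
  have hj1 : j = 1 := by
    rcases Nat.lt_or_ge j 1 with h0 | h0
    · obtain rfl : j = 0 := by omega
      rw [Nat.mul_zero] at hsj
      obtain ⟨rfl, rfl, rfl, rfl⟩ : a = 0 ∧ b = 0 ∧ x = 0 ∧ e = 0 := by omega
      omega
    · obtain ⟨i, rfl⟩ := Nat.exists_eq_add_of_le h0
      have h1 : 1 * i ≤ n * i := Nat.mul_le_mul_right _ hn
      rw [Nat.mul_add] at hsj
      omega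
  subst hj1
  omega

/-- For every integer `n ≥ 1`, the largest integer not representable as a
non-negative integer linear combination of the 5-tuple
`(10n-1, 15n-1, 20n-1, 25n, 30n-1)` is `50n² - 1`, and the largest integer
having exactly one such representation is `50n² - 5n`. -/
theorem stmt17 (n : ℕ) (hn : 1 ≤ n) :
    IsGreatest {t : ℕ |
        numRep [10*n - 1, 15*n - 1, 20*n - 1, 25*n, 30*n - 1] t = 0}
      (50 * n ^ 2 - 1) ∧
    IsGreatest {t : ℕ |
        numRep [10*n - 1, 15*n - 1, 20*n - 1, 25*n, 30*n - 1] t = 1}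
      (50 * n ^ 2 - 5 * n) := by
  have hsq : n ≤ n ^ 2 := by nlinarith
  simp only [numRep_eq n _ hn]
  refine ⟨⟨?_, ?_⟩, ⟨?_, ?_⟩⟩
  · have : IsEmpty {c : Fin 5 → ℕ // IsRep n (50 * n ^ 2 - 1) c} :=
      ⟨fun c => not_isRep n _ hn (by omega) c.1 c.2⟩
    exact Nat.card_of_isEmpty
  · intro t (ht : Nat.card _ = 0)
    by_contra hlt
    obtain ⟨c, -, -, hc, -⟩ := exists_two n t hn (by omega) (by omega)
    have := finite_reps_s17 n t hn
    have : Nonempty {c : Fin 5 → ℕ // IsRep n t c} := ⟨⟨c, hc⟩⟩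
    exact Nat.card_pos.ne' ht
  · change Nat.card _ = 1
    simp only [isRep_unique n (50 * n ^ 2 - 5 * n) hn (by omega)]
    simp
  · intro t (ht : Nat.card _ = 1)
    by_contra hlt
    rw [Nat.card_eq_one_iff_unique] at ht
    obtain ⟨hsub, ⟨c₀⟩⟩ := ht
    obtain ⟨c, c', hne, hc, hc'⟩ := exists_two n t hn (by omega)
      (fun h => not_isRep n t hn h c₀.1 c₀.2)
    exact hne (congrArg Subtype.val (hsub.elim ⟨c, hc⟩ ⟨c', hc'⟩))
end
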